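/- Let N ≥ 2 be an integer, ω > 0, and 1 < p < p_max, let k ≥ 2 be an integer, and let U : [0,∞) → (0,∞) be the radial profile of a ground-state profile u of (QLS). Suppose v : [0,∞) → ℝ is continuous, twice continuously differentiable on (0,∞), satisfies ∫₀^∞ (v(r)² + v'(r)²) r^{N−1} dr < ∞, and solves L₊,ₖ v = 0 on (0,∞) (the radial linearized equation with angular eigenvalue λ_k = k(N+k−2)). Then v is identically zero. -/

import Mathlib

open MeasureTheory Real Filter Topology

noncomputable section

/-- Partial derivative along the `i`-th coordinate direction. -/
def pd {N : ℕ} {F : Type*} [NormedAddCommGroup F] [NormedSpace ℝ F]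
    (i : Fin N) (f : EuclideanSpace ℝ (Fin N) → F) (x : EuclideanSpace ℝ (Fin N)) : F :=
  fderiv ℝ f x (EuclideanSpace.single i 1)

/-- Euclidean Laplacian. -/
def lap {N : ℕ} {F : Type*} [NormedAddCommGroup F] [NormedSpace ℝ F]
    (f : EuclideanSpace ℝ (Fin N) → F) (x : EuclideanSpace ℝ (Fin N)) : F :=
  ∑ i : Fin N, pd i (pd i f) x

/-- Squared norm of the gradient of a real-valued function: `|∇f|²`. -/
def gradsq {N : ℕ} (f : EuclideanSpace ℝ (Fin N) → ℝ) (x : EuclideanSpace ℝ (Fin N)) : ℝ :=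
  ∑ i : Fin N, (pd i f x) ^ 2

/-- A ground-state profile of the quasilinear Schrödinger equation (QLS)
`-Δu - uΔ(u²) + ωu - u^p = 0` on `ℝ^N`: smooth, positive, radially symmetric with a
strictly decreasing positive profile, solves (QLS) pointwise, and decays
exponentially together with all its derivatives. -/
structure IsGroundState (N : ℕ) (ω p : ℝ) (u : EuclideanSpace ℝ (Fin N) → ℝ) : Prop where
  smooth : ContDiff ℝ (⊤ : ℕ∞) u
  pos : ∀ x, 0 < u x
  radial : ∃ U : ℝ → ℝ, StrictAntiOn U (Set.Ici 0) ∧ (∀ r, 0 ≤ r → 0 < U r) ∧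
      ∀ x, u x = U ‖x‖
  solves : ∀ x, -lap u x - u x * lap (fun y => (u y) ^ 2) x + ω * u x - (u x) ^ p = 0
  decay : ∀ k : ℕ, ∃ C > 0, ∃ δ > 0, ∀ x,
      ‖iteratedFDeriv ℝ k u x‖ ≤ C * Real.exp (-δ * ‖x‖)

/-- The linearized operator `L₊` around `u` (real-valued functions). -/
def Lplus {N : ℕ} (ω p : ℝ) (u η : EuclideanSpace ℝ (Fin N) → ℝ)
    (x : EuclideanSpace ℝ (Fin N)) : ℝ :=
  -lap η x - 2 * u x * lap (fun y => u y * η y) x + ω * η x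
    - (lap (fun y => (u y) ^ 2) x + p * u x ^ (p - 1)) * η x

/-- The linearized operator `L₋` around `u`. -/
def Lminus {N : ℕ} (ω p : ℝ) (u ζ : EuclideanSpace ℝ (Fin N) → ℝ)
    (x : EuclideanSpace ℝ (Fin N)) : ℝ :=
  -lap ζ x + ω * ζ x - (lap (fun y => (u y) ^ 2) x + u x ^ (p - 1)) * ζ x

/-- Radial Laplacian `Δ_r f (r) = f''(r) + ((N-1)/r) f'(r)`. -/
def lapRad (N : ℕ) (f : ℝ → ℝ) (r : ℝ) : ℝ :=
  deriv (deriv f) r + ((N : ℝ) - 1) / r * deriv f r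

/-- The radial linearized operator `L₊,ₖ` with angular eigenvalue `λ_k = k(N+k-2)`. -/
def LplusRad (N : ℕ) (ω p : ℝ) (U : ℝ → ℝ) (k : ℕ) (v : ℝ → ℝ) (r : ℝ) : ℝ :=
  -(1 + 2 * U r ^ 2) *
      (deriv (deriv v) r + ((N : ℝ) - 1) / r * deriv v r
        - (k : ℝ) * ((N : ℝ) + (k : ℝ) - 2) / r ^ 2 * v r)
    - 4 * U r * deriv U r * deriv v r + ω * v r
    - (2 * U r * lapRad N U r + lapRad N (fun s => U s ^ 2) r + p * U r ^ (p - 1)) * v r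

/-- The radial linearized operator `L₋,ₖ` with angular eigenvalue `λ_k = k(N+k-2)`. -/
def LminusRad (N : ℕ) (ω p : ℝ) (U : ℝ → ℝ) (k : ℕ) (v : ℝ → ℝ) (r : ℝ) : ℝ :=
  -deriv (deriv v) r - ((N : ℝ) - 1) / r * deriv v r
    + (k : ℝ) * ((N : ℝ) + (k : ℝ) - 2) / r ^ 2 * v r + ω * v r
    - (lapRad N (fun s => U s ^ 2) r + U r ^ (p - 1)) * v r

lemma norm_hasF {N : ℕ} (x : EuclideanSpace ℝ (Fin N)) (hx : x ≠ 0) :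
    ∃ L : EuclideanSpace ℝ (Fin N) →L[ℝ] ℝ, HasFDerivAt (fun y : EuclideanSpace ℝ (Fin N) => ‖y‖) L x ∧
      ∀ i, L (EuclideanSpace.single i 1) = x i / ‖x‖ := by
  have hn : 0 < ‖x‖ := norm_pos_iff.mpr hx
  have h1 := (hasStrictFDerivAt_norm_sq x).hasFDerivAt.sqrt (by positivity)
  have e : (fun y : EuclideanSpace ℝ (Fin N) => √(‖y‖ ^ 2)) = fun y => ‖y‖ := by
    funext y; exact Real.sqrt_sq (norm_nonneg _)
  rw [e] at h1
  refine ⟨_, h1, fun i => ?_⟩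
  simp [Real.sqrt_sq (norm_nonneg _), EuclideanSpace.inner_single_right]
  field_simp

lemma lap_radial {N : ℕ} (f : EuclideanSpace ℝ (Fin N) → ℝ) (h : ℝ → ℝ) (hh : ContDiff ℝ 2 h)
    (hf : ∀ y, f y = h ‖y‖) (x : EuclideanSpace ℝ (Fin N)) (hx : x ≠ 0) :
    lap f x = deriv (deriv h) ‖x‖ + ((N : ℝ) - 1) / ‖x‖ * deriv h ‖x‖ := by
  have hn : 0 < ‖x‖ := norm_pos_iff.mpr hx
  have hd : Differentiable ℝ h := hh.differentiable (by norm_num)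
  have hd1 : ContDiff ℝ 1 (deriv h) := by
    have h2 : ContDiff ℝ (1 + 1) h := by rw [one_add_one_eq_two]; exact hh
    exact (contDiff_succ_iff_deriv.1 h2).2.2
  have hdd : Differentiable ℝ (deriv h) := hd1.differentiable (by norm_num)
  have hfe : f = fun y => h ‖y‖ := funext hf
  have hpd : ∀ i, ∀ y, y ≠ 0 → pd i f y = deriv h ‖y‖ / ‖y‖ * y i := by
    intro i y hy
    obtain ⟨L, hL, hLi⟩ := norm_hasF y hy
    have := ((hd ‖y‖).hasDerivAt).comp_hasFDerivAt y hL
    unfold pd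
    rw [hfe]
    have e2 : fderiv ℝ (fun y => h ‖y‖) y = _ := this.fderiv
    rw [e2]
    simp [hLi]
    ring
  have hpp : ∀ i, pd i (pd i f) x =
      (deriv (deriv h) ‖x‖ / ‖x‖ ^ 2 - deriv h ‖x‖ / ‖x‖ ^ 3) * x i ^ 2 + deriv h ‖x‖ / ‖x‖ := by
    intro i
    have hev : pd i f =ᶠ[𝓝 x] fun y => deriv h ‖y‖ / ‖y‖ * y i := by
      filter_upwards [isOpen_ne.mem_nhds hx] with y hy using hpd i y hy
    obtain ⟨L, hL, hLi⟩ := norm_hasF x hx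
    have hq : HasDerivAt (fun s => deriv h s / s) _ ‖x‖ :=
      ((hdd ‖x‖).hasDerivAt).div (hasDerivAt_id _) hn.ne'
    have h1 := hq.comp_hasFDerivAt x hL
    have hpr : HasFDerivAt (fun y : EuclideanSpace ℝ (Fin N) => y i)
      (EuclideanSpace.proj (𝕜 := ℝ) i : EuclideanSpace ℝ (Fin N) →L[ℝ] ℝ) x :=
      (EuclideanSpace.proj (𝕜 := ℝ) i : EuclideanSpace ℝ (Fin N) →L[ℝ] ℝ).hasFDerivAt
    have h2 := h1.mul hpr
    have e2 : fderiv ℝ (fun y : EuclideanSpace ℝ (Fin N) => deriv h ‖y‖ / ‖y‖ * y i) x = _ := h2.fderiv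
    have e3 : pd i (pd i f) x = fderiv ℝ (fun y : EuclideanSpace ℝ (Fin N) => deriv h ‖y‖ / ‖y‖ * y i) x
        (EuclideanSpace.single i 1) := by
      show fderiv ℝ (pd i f) x _ = _
      rw [hev.fderiv_eq]
    rw [e3, e2]
    simp [hLi]
    field_simp
    ring
  unfold lap
  simp_rw [hpp]
  rw [Finset.sum_add_distrib, ← Finset.mul_sum]
  have : ∑ i, x i ^ 2 = ‖x‖ ^ 2 := by
    rw [EuclideanSpace.real_norm_sq_eq]
  rw [this]
  simp
  field_simp
  ring

/-- Abstract Sturm-type argument. -/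
lemma sturm (a W v w v' w' c : ℝ → ℝ)
    (hW : ∀ r, 0 < r → W r = a r * (v' r * w r - v r * w' r))
    (ha : ∀ r, 0 < r → 0 < a r) (hc : ∀ r, 0 < r → 0 < c r)
    (hWd : ∀ r, 0 < r → HasDerivAt W (c r * (v r * w r)) r)
    (hv : ∀ r, 0 < r → HasDerivAt v (v' r) r)
    (hw : ∀ r, 0 < r → HasDerivAt w (w' r) r)
    (hw0 : ∀ r, 0 < r → w r = 0 → w' r = 0)
    (hinf : ∀ ε > 0, ∀ R > 0, ∃ r > R, |W r| < ε)
    (hzero : ∀ ε > 0, ∀ R > 0, ∃ r, 0 < r ∧ r < R ∧ |W r| < ε) :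
    ∀ r, 0 < r → w r ≠ 0 → v r = 0 := by
  set F : ℝ → ℝ := fun r => W r * Real.arctan (v r / w r) with hF
  have habs : ∀ x : ℝ, |Real.arctan x| ≤ 2 := fun x => by
    rw [abs_le]
    have := Real.neg_pi_div_two_lt_arctan x
    have := Real.arctan_lt_pi_div_two x
    have := Real.pi_lt_four
    constructor <;> linarith
  have hFb : ∀ r, |F r| ≤ 2 * |W r| := fun r => by
    simp only [hF, abs_mul]
    nlinarith [abs_nonneg (W r), habs (v r / w r)]
  have hsgn : ∀ x y : ℝ, 0 ≤ x * y * Real.arctan (x / y) := by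
    intro x y
    rcases le_total 0 (x * y) with h | h
    · refine mul_nonneg h (Real.arctan_nonneg.mpr ?_)
      rw [div_nonneg_iff]
      exact mul_nonneg_iff.mp h
    · refine mul_nonneg_of_nonpos_of_nonpos h ?_
      rw [← Real.arctan_zero]
      refine Real.arctan_strictMono.monotone ?_
      rw [div_nonpos_iff]
      exact mul_nonpos_iff.mp h
  have hFd : ∀ r, 0 < r → ∃ D, HasDerivAt F D r ∧ c r * (v r * w r * Real.arctan (v r / w r)) ≤ D := by
    intro r hr
    by_cases h0 : w r = 0
    · refine ⟨0, ?_, by simp [h0]⟩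
      have hW0 : W r = 0 := by rw [hW r hr, h0, hw0 r hr h0]; ring
      have hd := hWd r hr
      rw [h0, mul_zero, mul_zero] at hd
      rw [hasDerivAt_iff_isLittleO] at hd ⊢
      refine Asymptotics.IsBigO.trans_isLittleO (Asymptotics.IsBigO.of_bound 2 ?_) hd
      filter_upwards with y
      have : F r = 0 := by simp [hF, hW0]
      simpa [this, hW0] using hFb y
    · have hq := ((hv r hr).div (hw r hr) h0).arctan
      have h1 := (hWd r hr).mul hq
      refine ⟨_, h1, ?_⟩
      have : 0 ≤ W r * (1 / (1 + (v r / w r) ^ 2) * ((v' r * w r - v r * w' r) / w r ^ 2)) := by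
        rw [hW r hr]
        have := ha r hr
        have : a r * (v' r * w r - v r * w' r) * (1 / (1 + (v r / w r) ^ 2) * ((v' r * w r - v r * w' r) / w r ^ 2))
          = a r * (1 / (1 + (v r / w r) ^ 2)) * ((v' r * w r - v r * w' r) / w r) ^ 2 := by ring
        rw [this]; positivity
      simp only [Pi.div_apply]
      linarith
  have hmono : MonotoneOn F (Set.Ioi 0) := by
    refine monotoneOn_of_deriv_nonneg (convex_Ioi 0) ?_ ?_ ?_
    · intro r hr
      obtain ⟨D, hD, _⟩ := hFd r hr
      exact hD.continuousAt.continuousWithinAt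
    · intro r hr
      rw [interior_Ioi] at hr
      obtain ⟨D, hD, _⟩ := hFd r hr
      exact hD.differentiableAt.differentiableWithinAt
    · intro r hr
      rw [interior_Ioi] at hr
      obtain ⟨D, hD, h⟩ := hFd r hr
      rw [hD.deriv]
      exact le_trans (mul_nonneg (hc r hr).le (hsgn _ _)) h
  have hF0 : ∀ r, 0 < r → F r = 0 := by
    intro r hr
    apply le_antisymm
    · refine le_of_forall_pos_le_add fun ε hε => ?_
      obtain ⟨s, hs, hsW⟩ := hinf (ε / 2) (by positivity) r hr
      have := hmono hr (hr.trans hs) hs.le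
      have := hFb s
      have := le_abs_self (F s)
      linarith
    · refine le_of_forall_pos_le_add fun ε hε => ?_
      obtain ⟨s, hs0, hs, hsW⟩ := hzero (ε / 2) (by positivity) r hr
      have := hmono hs0 hr hs.le
      have := hFb s
      have := neg_abs_le (F s)
      linarith
  intro r hr hwr
  obtain ⟨D, hD, h⟩ := hFd r hr
  have hD0 : D = 0 := by
    have : F =ᶠ[𝓝 r] fun _ => 0 := by
      filter_upwards [Ioi_mem_nhds hr] with y hy using hF0 y hy
    exact hD.unique ((hasDerivAt_const r (0:ℝ)).congr_of_eventuallyEq this)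
  rw [hD0] at h
  have h2 : v r * w r * Real.arctan (v r / w r) = 0 :=
    le_antisymm (by have := hc r hr; by_contra hh; push Not at hh; nlinarith [mul_pos this hh]) (hsgn _ _)
  rcases mul_eq_zero.mp h2 with h3 | h3
  · exact (mul_eq_zero.mp h3).resolve_right hwr
  · rw [Real.arctan_eq_zero_iff] at h3
    exact (div_eq_zero_iff.mp h3).resolve_right hwr

lemma small_at_inf (h : ℝ → ℝ) (hi : IntegrableOn h (Set.Ioi 0)) (ε R : ℝ) (hε : 0 < ε) (hR : 0 < R) :
    ∃ r > R, h r < ε := by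
  by_contra hcon
  push Not at hcon
  have h1 : IntegrableOn h (Set.Ioi R) := hi.mono_set (Set.Ioi_subset_Ioi hR.le)
  have h2 : IntegrableOn (fun _ : ℝ => ε) (Set.Ioi R) := by
    refine Integrable.mono h1 aestronglyMeasurable_const ?_
    refine (ae_restrict_iff' measurableSet_Ioi).mpr (Eventually.of_forall fun r hr => ?_)
    rw [Real.norm_eq_abs, Real.norm_eq_abs, abs_of_pos hε]
    exact (hcon r hr).trans (le_abs_self _)
  rw [integrableOn_const_iff] at h2
  rcases h2 with h2 | h2
  · exact hε.ne' (enorm_eq_zero.mp h2)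
  · simp at h2

lemma small_at_zero (h : ℝ → ℝ) (hi : IntegrableOn h (Set.Ioi 0)) (ε R : ℝ) (hε : 0 < ε) (hR : 0 < R) :
    ∃ r, 0 < r ∧ r < R ∧ r * h r < ε := by
  by_contra hcon
  push Not at hcon
  have h1 : IntegrableOn h (Set.Ioo 0 R) := hi.mono_set Set.Ioo_subset_Ioi_self
  have h2 : IntegrableOn (fun r : ℝ => r⁻¹) (Set.Ioo 0 R) := by
    refine Integrable.mono (h1.const_mul ε⁻¹) measurable_inv.aestronglyMeasurable ?_
    refine (ae_restrict_iff' measurableSet_Ioo).mpr (Eventually.of_forall fun r hr => ?_)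
    have := hcon r hr.1 hr.2
    have hr0 := hr.1
    rw [Real.norm_eq_abs, Real.norm_eq_abs, abs_of_pos (inv_pos.mpr hr.1)]
    refine le_trans ?_ (le_abs_self _)
    rw [inv_mul_eq_div, le_div_iff₀ hε, inv_mul_le_iff₀ hr0]
    exact this
  have h3 : IntervalIntegrable (fun r : ℝ => r⁻¹) volume 0 R := by
    rw [intervalIntegrable_iff_integrableOn_Ioo_of_le hR.le]; exact h2
  rw [intervalIntegrable_inv_iff] at h3
  rcases h3 with h3 | h3
  · exact hR.ne h3
  · exact h3 Set.left_mem_uIcc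

set_option maxHeartbeats 2000000 in
lemma core (N : ℕ) (hN : 2 ≤ N) (ω p : ℝ) (g : ℝ → ℝ)
    (hg : ContDiff ℝ 3 g) (hanti : StrictAntiOn g (Set.Ici 0)) (hpos : ∀ r, 0 ≤ r → 0 < g r)
    (hg0 : deriv g 0 = 0)
    (hode : ∀ r, 0 < r → -(lapRad N g r) - g r * lapRad N (fun s => g s ^ 2) r + ω * g r - g r ^ p = 0)
    (hdec1 : ∃ C > 0, ∃ δ > 0, ∀ r, 0 < r → |deriv g r| ≤ C * Real.exp (-δ * r))
    (hdec2 : ∃ C > 0, ∃ δ > 0, ∀ r, 0 < r → |deriv (deriv g) r| ≤ C * Real.exp (-δ * r))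
    (k : ℕ) (hk : 2 ≤ k)
    (v : ℝ → ℝ) (hvc : ContinuousOn v (Set.Ici 0)) (hv2 : ContDiffOn ℝ 2 v (Set.Ioi 0))
    (hint : IntegrableOn (fun r => ((v r) ^ 2 + (deriv v r) ^ 2) * r ^ (N - 1)) (Set.Ioi 0))
    (heq : ∀ r ∈ Set.Ioi (0 : ℝ), LplusRad N ω p g k v r = 0) :
    ∀ r, 0 ≤ r → v r = 0 := by
  have hc2 : ContDiff ℝ 2 (deriv g) := by
    have h2 : ContDiff ℝ (2 + 1) g := by norm_num; exact hg
    exact (contDiff_succ_iff_deriv.1 h2).2.2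
  have hc1 : ContDiff ℝ 1 (deriv (deriv g)) := by
    have h2 : ContDiff ℝ (1 + 1) (deriv g) := by norm_num; exact hc2
    exact (contDiff_succ_iff_deriv.1 h2).2.2
  have d0 : ∀ r, HasDerivAt g (deriv g r) r := fun r =>
    (hg.differentiable (by norm_num) r).hasDerivAt
  have d1 : ∀ r, HasDerivAt (deriv g) (deriv (deriv g) r) r := fun r =>
    (hc2.differentiable (by norm_num) r).hasDerivAt
  have d2 : ∀ r, HasDerivAt (deriv (deriv g)) (deriv (deriv (deriv g)) r) r := fun r =>
    (hc1.differentiable (by norm_num) r).hasDerivAt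
  have hsq1 : deriv (fun s => g s ^ 2) = fun s => 2 * g s * deriv g s := by
    funext s
    have h : deriv (fun s => g s ^ 2) s = _ := ((d0 s).pow 2).deriv
    rw [h]; simp
  have hsq2 : ∀ r, deriv (deriv (fun s => g s ^ 2)) r =
      2 * deriv g r ^ 2 + 2 * g r * deriv (deriv g) r := by
    intro r
    rw [hsq1]
    have h : deriv (fun s => 2 * g s * deriv g s) r = _ := (((d0 r).const_mul 2).mul (d1 r)).deriv
    rw [h]; ring
  have hlsq : ∀ r, lapRad N (fun s => g s ^ 2) r = 2 * deriv g r ^ 2 + 2 * g r * deriv (deriv g) r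
      + ((N : ℝ) - 1) / r * (2 * g r * deriv g r) := by
    intro r; unfold lapRad; rw [hsq2, hsq1]
  -- differentiated equation
  have hweq : ∀ r, 0 < r → -(1 + 2 * g r ^ 2) * (deriv (deriv (deriv g)) r
      + ((N : ℝ) - 1) / r * deriv (deriv g) r - ((N : ℝ) - 1) / r ^ 2 * deriv g r)
      - 4 * g r * deriv g r * deriv (deriv g) r + ω * deriv g r
      - (2 * g r * lapRad N g r + lapRad N (fun s => g s ^ 2) r + p * g r ^ (p - 1)) * deriv g r = 0 := by
    intro r hr
    have hE : (fun s => -(1 + 2 * g s ^ 2) * (deriv (deriv g) s + ((N : ℝ) - 1) * s⁻¹ * deriv g s)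
        - 2 * g s * deriv g s ^ 2 + ω * g s - g s ^ p) =ᶠ[𝓝 r] fun _ => 0 := by
      filter_upwards [Ioi_mem_nhds hr] with s hs
      have := hode s hs
      rw [hlsq s] at this
      unfold lapRad at this
      rw [← this]; ring
    have hz := (hasDerivAt_const r (0:ℝ)).congr_of_eventuallyEq hE
    have hfd := ((((((d0 r).pow 2).const_mul 2).const_add 1).neg.mul
      ((d2 r).add (((hasDerivAt_inv hr.ne').const_mul ((N:ℝ) - 1)).mul (d1 r)))).sub
      (((d0 r).const_mul 2).mul ((d1 r).pow 2))).add ((d0 r).const_mul ω) |>.sub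
      ((d0 r).rpow_const (p := p) (Or.inl (hpos r hr.le).ne'))
    have := hfd.unique hz
    rw [← this, hlsq r]
    unfold lapRad
    simp
    field_simp
    ring
  have dv : ∀ r, 0 < r → HasDerivAt v (deriv v r) r := fun r hr =>
    ((hv2.differentiableOn (by norm_num)).differentiableAt (Ioi_mem_nhds hr)).hasDerivAt
  have dv1 : ∀ r, 0 < r → HasDerivAt (deriv v) (deriv (deriv v) r) r := by
    intro r hr
    have h2 : ContDiffOn ℝ (1 + 1) v (Set.Ioi 0) := by norm_num; exact hv2
    have := ((contDiffOn_succ_iff_deriv_of_isOpen isOpen_Ioi).1 h2).2.2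
    exact ((this.differentiableOn (by norm_num)).differentiableAt (Ioi_mem_nhds hr)).hasDerivAt
  have hNr : (2:ℝ) ≤ N := by exact_mod_cast hN
  have hkr : (2:ℝ) ≤ k := by exact_mod_cast hk
  have hlam : 0 < (k:ℝ) * (N + k - 2) - (N - 1) := by nlinarith
  have hNp : ∃ m, N = m + 2 := ⟨N - 2, by omega⟩
  set a : ℝ → ℝ := fun r => r ^ (N - 1) * (1 + 2 * g r ^ 2) with ha
  set W : ℝ → ℝ := fun r => a r * (deriv v r * deriv g r - v r * deriv (deriv g) r) with hWdef
  have hapos : ∀ r, 0 < r → 0 < a r := fun r hr => by simp only [ha]; positivity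
  have hWd : ∀ r, 0 < r → HasDerivAt W
      ((a r * ((k:ℝ) * (N + k - 2) - (N - 1)) / r ^ 2) * (v r * deriv g r)) r := by
    intro r hr
    have h1 := ((hasDerivAt_pow (N - 1) r).mul ((((d0 r).pow 2).const_mul 2).const_add 1)).mul
      (((dv1 r hr).mul (d1 r)).sub ((dv r hr).mul (d2 r)))
    refine h1.congr_deriv ?_
    have e1 := heq r hr
    have e2 := hweq r hr
    unfold LplusRad at e1
    simp only [ha]
    obtain ⟨m, rfl⟩ := hNp
    simp
    push_cast at e1 e2
    have e3 : r ^ (m + 1) = r * r ^ m := by ring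
    rw [e3]
    field_simp at e1 e2 ⊢
    linear_combination (-deriv g r) * e1 + (v r) * e2
  have hnonpos : ∀ r, 0 < r → deriv g r ≤ 0 := by
    intro r hr
    have h1 : AntitoneOn g (Set.Ioi 0) := (hanti.mono Set.Ioi_subset_Ici_self).antitoneOn
    have h2 := h1.derivWithin_nonpos (x := r)
    rwa [derivWithin_of_isOpen isOpen_Ioi hr] at h2
  have hw0 : ∀ r, 0 < r → deriv g r = 0 → deriv (deriv g) r = 0 := by
    intro r hr h0
    have : IsLocalMax (deriv g) r := by
      filter_upwards [Ioi_mem_nhds hr] with s hs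
      rw [h0]; exact hnonpos s hs
    exact this.deriv_eq_zero
  have hgb : ∀ r, 0 < r → g r ^ 2 ≤ g 0 ^ 2 := by
    intro r hr
    have := hanti (Set.mem_Ici.mpr le_rfl) (Set.mem_Ici.mpr hr.le) hr
    have := hpos r hr.le
    nlinarith
  set K : ℝ := 1 + 2 * g 0 ^ 2 with hK
  have hKpos : 0 < K := by positivity
  have hab : ∀ r, 0 < r → a r ≤ K * r ^ (N - 1) := by
    intro r hr
    simp only [ha, hK]
    have := hgb r hr
    have : 0 < r ^ (N - 1) := by positivity
    nlinarith
  have hinf : ∀ ε > 0, ∀ R > 0, ∃ r > R, |W r| < ε := by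
    intro ε hε R hR
    have htend : Tendsto (fun r => K * r ^ (N - 1) * (deriv g r ^ 2 + deriv (deriv g) r ^ 2)) atTop (𝓝 0) := by
      have hone : ∀ f : ℝ → ℝ, (∃ C > 0, ∃ δ > 0, ∀ r, 0 < r → |f r| ≤ C * Real.exp (-δ * r)) →
          Tendsto (fun r => r ^ (N - 1) * f r ^ 2) atTop (𝓝 0) := by
        rintro f ⟨C, hC, δ, hδ, hf⟩
        have h1 := (tendsto_rpow_mul_exp_neg_mul_atTop_nhds_zero ((N - 1 : ℕ) : ℝ) (2 * δ)
          (by positivity)).const_mul (C ^ 2)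
        rw [mul_zero] at h1
        refine tendsto_of_tendsto_of_tendsto_of_le_of_le' tendsto_const_nhds h1 ?_ ?_
        · filter_upwards [eventually_gt_atTop 0] with r hr
          positivity
        · filter_upwards [eventually_gt_atTop 0] with r hr
          rw [Real.rpow_natCast]
          have h2 : f r ^ 2 ≤ (C * Real.exp (-δ * r)) ^ 2 := by
            rw [← sq_abs]
            exact pow_le_pow_left₀ (abs_nonneg _) (hf r hr) 2
          have h3 : (C * Real.exp (-δ * r)) ^ 2 = C ^ 2 * Real.exp (-(2 * δ) * r) := by
            rw [mul_pow, ← Real.exp_nat_mul]; congr 2; push_cast; ring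
          rw [h3] at h2
          have : 0 < r ^ (N - 1) := by positivity
          nlinarith
      have := ((hone _ hdec1).add (hone _ hdec2)).const_mul K
      simp only [add_zero, mul_zero] at this
      refine this.congr fun r => ?_
      ring
    obtain ⟨R', hR'⟩ := eventually_atTop.1 (htend.eventually (gt_mem_nhds (half_pos hε)))
    obtain ⟨r, hr, hr2⟩ := small_at_inf _ hint (ε / (2 * K)) (max R R') (by positivity)
      (lt_max_of_lt_left hR)
    have hrR : R < r := (le_max_left _ _).trans_lt hr
    have hr0 : 0 < r := hR.trans hrR
    refine ⟨r, hrR, ?_⟩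
    have h1 := hR' r ((le_max_right _ _).trans hr.le)
    rw [lt_div_iff₀ (by positivity)] at hr2
    have hX : |deriv v r * deriv g r - v r * deriv (deriv g) r| ≤
        v r ^ 2 + deriv v r ^ 2 + (deriv g r ^ 2 + deriv (deriv g) r ^ 2) := by
      rw [abs_le]
      constructor <;> nlinarith [sq_nonneg (deriv v r + deriv g r), sq_nonneg (deriv v r - deriv g r),
        sq_nonneg (v r - deriv (deriv g) r), sq_nonneg (v r + deriv (deriv g) r), sq_nonneg (v r),
        sq_nonneg (deriv v r), sq_nonneg (deriv g r), sq_nonneg (deriv (deriv g) r)]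
    have : |W r| ≤ K * r ^ (N - 1) * (v r ^ 2 + deriv v r ^ 2 + (deriv g r ^ 2 + deriv (deriv g) r ^ 2)) := by
      simp only [hWdef]
      rw [abs_mul, abs_of_pos (hapos r hr0)]
      exact mul_le_mul (hab r hr0) hX (abs_nonneg _) (by positivity)
    nlinarith
  have hzero : ∀ ε > 0, ∀ R > 0, ∃ r, 0 < r ∧ r < R ∧ |W r| < ε := by
    intro ε hε R hR
    obtain ⟨V, hV⟩ := (isCompact_Icc (a := (0:ℝ)) (b := 1)).exists_bound_of_continuousOn
      (hvc.mono Set.Icc_subset_Ici_self)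
    obtain ⟨B, hB⟩ := (isCompact_Icc (a := (0:ℝ)) (b := 1)).exists_bound_of_continuousOn
      (f := deriv (deriv g)) hc1.continuous.continuousOn
    have hV0 : 0 ≤ V := (norm_nonneg _).trans (hV 0 (by simp))
    have hB0 : 0 ≤ B := (norm_nonneg _).trans (hB 0 (by simp))
    have hwB : ∀ r, 0 < r → r ≤ 1 → |deriv g r| ≤ B * r := by
      intro r hr hr1
      have := (convex_Icc (0:ℝ) 1).norm_image_sub_le_of_norm_deriv_le (f := deriv g) (C := B)
        (fun x _ => (d1 x).differentiableAt) hB (x := 0) (y := r) (by simp) ⟨hr.le, hr1⟩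
      simpa [hg0, abs_of_pos hr] using this
    set M := K * (B + V * B) + 1 with hM
    have hMpos : 0 < M := by positivity
    have hKB : 0 ≤ K * B := by positivity
    obtain ⟨r, hr0, hr, hr2⟩ := small_at_zero _ hint (ε / (2 * M)) (min (min R 1) (ε / (2 * M)))
      (by positivity) (by positivity)
    have hrR : r < R := hr.trans_le ((min_le_left _ _).trans (min_le_left _ _))
    have hr1 : r < 1 := hr.trans_le ((min_le_left _ _).trans (min_le_right _ _))
    have hrε : r < ε / (2 * M) := hr.trans_le (min_le_right _ _)
    refine ⟨r, hr0, hrR, ?_⟩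
    rw [lt_div_iff₀ (by positivity)] at hr2 hrε
    have hpr : r ^ (N - 1) ≤ r := by
      calc r ^ (N - 1) ≤ r ^ 1 := pow_le_pow_of_le_one hr0.le hr1.le (by omega)
        _ = r := pow_one r
    have hpp : 0 < r ^ (N - 1) := by positivity
    have hvr : |v r| ≤ V := hV r ⟨hr0.le, hr1.le⟩
    have hbr : |deriv (deriv g) r| ≤ B := hB r ⟨hr0.le, hr1.le⟩
    have hv' : |deriv v r| ≤ 1 + deriv v r ^ 2 := by
      rw [abs_le]; constructor <;> nlinarith [sq_nonneg (deriv v r - 1), sq_nonneg (deriv v r + 1)]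
    have hX : |deriv v r * deriv g r - v r * deriv (deriv g) r| ≤
        (1 + deriv v r ^ 2) * (B * r) + V * B := by
      refine (abs_sub _ _).trans ?_
      rw [abs_mul, abs_mul]
      exact add_le_add (mul_le_mul hv' (hwB r hr0 hr1.le) (abs_nonneg _) (by positivity))
        (mul_le_mul hvr hbr (abs_nonneg _) hV0)
    have hWb : |W r| ≤ K * r ^ (N - 1) * ((1 + deriv v r ^ 2) * (B * r) + V * B) := by
      simp only [hWdef]
      rw [abs_mul, abs_of_pos (hapos r hr0)]
      exact mul_le_mul (hab r hr0) hX (abs_nonneg _) (by positivity)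
    set T := r * ((v r ^ 2 + deriv v r ^ 2) * r ^ (N - 1)) with hT
    have hT0 : 0 ≤ T := by positivity
    have hT1 : r * (deriv v r ^ 2 * r ^ (N - 1)) ≤ T := by
      have : 0 ≤ r * (v r ^ 2 * r ^ (N - 1)) := by positivity
      rw [hT]; linarith
    have h5 : K * r ^ (N - 1) * ((1 + deriv v r ^ 2) * (B * r) + V * B) ≤
        K * B * T + K * (B + V * B) * r := by
      have s1 : K * B * (r * (deriv v r ^ 2 * r ^ (N - 1))) ≤ K * B * T :=
        mul_le_mul_of_nonneg_left hT1 hKB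
      have s2 : K * B * r ^ (N - 1) * r ≤ K * B * r := by
        have : r ^ (N - 1) * r ≤ r := by nlinarith
        nlinarith
      have s3 : K * (V * B) * r ^ (N - 1) ≤ K * (V * B) * r :=
        mul_le_mul_of_nonneg_left hpr (by positivity)
      linarith
    have h6 : K * B * T ≤ M * T := by
      refine mul_le_mul_of_nonneg_right ?_ hT0
      have : 0 ≤ K * (V * B) := by positivity
      rw [hM]; linarith
    have h7 : K * (B + V * B) * r ≤ M * r := by
      refine mul_le_mul_of_nonneg_right ?_ hr0.le
      rw [hM]; linarith
    linarith
  have hst := sturm a W v (deriv g) (deriv v) (deriv (deriv g))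
    (fun r => a r * ((k:ℝ) * (N + k - 2) - (N - 1)) / r ^ 2) (fun r _ => rfl) hapos
    (fun r hr => by have := hapos r hr; positivity) hWd dv (fun r _ => d1 r) hw0 hinf hzero
  have hvpos : ∀ r, 0 < r → v r = 0 := by
    intro r hr
    by_contra hne
    have hev : ∀ᶠ s in 𝓝 r, v s ≠ 0 := (dv r hr).continuousAt.eventually_ne hne
    have hev2 : ∀ᶠ s in 𝓝 r, deriv g s = 0 := by
      filter_upwards [hev, Ioi_mem_nhds hr] with s hs hs0
      by_contra h
      exact hs (hst s hs0 h)
    obtain ⟨l, hl, hball⟩ := Metric.eventually_nhds_iff.1 (hev2.and (Ioi_mem_nhds hr))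
    have hcon : g (r + l / 2) = g r := by
      refine (convex_ball r l).is_const_of_fderivWithin_eq_zero (𝕜 := ℝ)
        (hg.differentiable (by norm_num)).differentiableOn ?_ ?_ ?_
      · intro s hs
        rw [fderivWithin_of_isOpen Metric.isOpen_ball hs]
        ext
        simpa using (hball hs).1
      · simp [Real.dist_eq, abs_of_pos hl, hl]
      · simpa using hl
    have := hanti (Set.mem_Ici.mpr hr.le) (Set.mem_Ici.mpr (by positivity : (0:ℝ) ≤ r + l / 2)) (by linarith)
    linarith
  intro r hr
  rcases hr.eq_or_lt with rfl | hr
  · have h1 : Tendsto v (𝓝[>] 0) (𝓝 (v 0)) :=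
      (hvc 0 (by simp)).mono_left (nhdsWithin_mono _ Set.Ioi_subset_Ici_self)
    have h2 : Tendsto v (𝓝[>] 0) (𝓝 0) := by
      refine tendsto_const_nhds.congr' ?_
      filter_upwards [self_mem_nhdsWithin] with s hs using (hvpos s hs).symm
    exact tendsto_nhds_unique h1 h2
  · exact hvpos r hr

/-- For `k ≥ 2`, a finite-energy solution of the radial linearized equation `L₊,ₖ v = 0` vanishes identically. -/
theorem stmt9 (N : ℕ) (hN : 2 ≤ N) (ω p : ℝ) (hω : 0 < ω) (hp : 1 < p)
    (hpmax : 3 ≤ N → p < (3 * (N : ℝ) + 2) / ((N : ℝ) - 2))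
    (u : EuclideanSpace ℝ (Fin N) → ℝ) (U : ℝ → ℝ)
    (hu : IsGroundState N ω p u)
    (hU : StrictAntiOn U (Set.Ici 0) ∧ (∀ r, 0 ≤ r → 0 < U r) ∧ ∀ x, u x = U ‖x‖)
    (k : ℕ) (hk : 2 ≤ k)
    (v : ℝ → ℝ) (hvc : ContinuousOn v (Set.Ici 0)) (hv2 : ContDiffOn ℝ 2 v (Set.Ioi 0))
    (hint : IntegrableOn (fun r => ((v r) ^ 2 + (deriv v r) ^ 2) * r ^ (N - 1)) (Set.Ioi 0))
    (heq : ∀ r ∈ Set.Ioi (0 : ℝ), LplusRad N ω p U k v r = 0) :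
    ∀ r, 0 ≤ r → v r = 0 := by
  obtain ⟨hanti, hpos, hrad⟩ := hU
  obtain ⟨e, hen⟩ : ∃ e : EuclideanSpace ℝ (Fin N), ‖e‖ = 1 :=
    ⟨EuclideanSpace.single (⟨0, by omega⟩ : Fin N) 1, by simp⟩
  set g : ℝ → ℝ := fun r => u (r • e) with hgdef
  have hgU : ∀ r, 0 ≤ r → g r = U r := by
    intro r hr
    simp [hgdef, hrad, norm_smul, hen, abs_of_nonneg hr]
  have hline : ∀ r : ℝ, HasDerivAt (fun s : ℝ => s • e) e r := fun r => by
    simpa using (hasDerivAt_id r).smul_const e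
  have hgs : ContDiff ℝ 3 g := by
    have h3 : ContDiff ℝ 3 u := contDiff_infty.1 hu.smooth 3
    exact h3.comp (contDiff_id.smul contDiff_const)
  have hud : Differentiable ℝ u := hu.smooth.differentiable (by simp)
  have hu2 : ContDiff ℝ 1 (fderiv ℝ u) := hu.smooth.fderiv_right (by norm_cast)
  have hud2 : Differentiable ℝ (fderiv ℝ u) := hu2.differentiable (by norm_num)
  have hg1 : deriv g = fun r => fderiv ℝ u (r • e) e := by
    funext r
    exact ((hud (r • e)).hasFDerivAt.comp_hasDerivAt r (hline r)).deriv
  have hg2 : deriv (deriv g) = fun r => fderiv ℝ (fderiv ℝ u) (r • e) e e := by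
    rw [hg1]
    funext r
    have h0 : HasDerivAt (fun s : ℝ => fderiv ℝ u (s • e)) (fderiv ℝ (fderiv ℝ u) (r • e) e) r :=
      (hud2 (r • e)).hasFDerivAt.comp_hasDerivAt r (hline r)
    have := h0.clm_apply (hasDerivAt_const r e)
    have h : deriv (fun r : ℝ => fderiv ℝ u (r • e) e) r = _ := this.deriv
    rw [h]; simp
  have hdec1 : ∃ C > 0, ∃ δ > 0, ∀ r, 0 < r → |deriv g r| ≤ C * Real.exp (-δ * r) := by
    obtain ⟨C, hC, δ, hδ, h⟩ := hu.decay 1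
    refine ⟨C, hC, δ, hδ, fun r hr => ?_⟩
    have h1 := h (r • e)
    rw [norm_iteratedFDeriv_one, norm_smul, hen, mul_one, Real.norm_eq_abs, abs_of_pos hr] at h1
    refine le_trans ?_ h1
    rw [hg1, ← Real.norm_eq_abs]
    simpa [hen] using (fderiv ℝ u (r • e)).le_opNorm e
  have hdec2 : ∃ C > 0, ∃ δ > 0, ∀ r, 0 < r → |deriv (deriv g) r| ≤ C * Real.exp (-δ * r) := by
    obtain ⟨C, hC, δ, hδ, h⟩ := hu.decay 2
    refine ⟨C, hC, δ, hδ, fun r hr => ?_⟩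
    have h1 := h (r • e)
    rw [← norm_iteratedFDeriv_fderiv (n := 1), norm_iteratedFDeriv_one, norm_smul, hen, mul_one,
      Real.norm_eq_abs, abs_of_pos hr] at h1
    refine le_trans ?_ h1
    rw [hg2, ← Real.norm_eq_abs]
    simpa [hen] using (fderiv ℝ (fderiv ℝ u) (r • e)).le_opNorm₂ e e
  have hg0 : deriv g 0 = 0 := by
    have hev : ∀ r, g (-r) = g r := fun r => by simp [hgdef, hrad]
    have h1 : deriv (fun r => g (-r)) 0 = -deriv g (-0) := deriv_comp_neg g 0
    rw [funext hev] at h1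
    simp at h1
    linarith
  have hug : ∀ y, u y = g ‖y‖ := fun y => by rw [hgU _ (norm_nonneg _), hrad]
  have hode : ∀ r, 0 < r →
      -(lapRad N g r) - g r * lapRad N (fun s => g s ^ 2) r + ω * g r - g r ^ p = 0 := by
    intro r hr
    have hx : r • e ≠ 0 := by
      rw [← norm_pos_iff, norm_smul, hen, Real.norm_eq_abs, abs_of_pos hr]; simpa using hr
    have hxn : ‖r • e‖ = r := by rw [norm_smul, hen, Real.norm_eq_abs, abs_of_pos hr, mul_one]
    have hgs2 : ContDiff ℝ 2 g := hgs.of_le (by norm_num)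
    have h1 := hu.solves (r • e)
    rw [lap_radial u g hgs2 hug _ hx, lap_radial (fun y => u y ^ 2) (fun s => g s ^ 2) (hgs2.pow 2)
      (fun y => by rw [hug y]) _ hx, hxn] at h1
    exact h1
  have hev0 : ∀ r, 0 < r → U =ᶠ[𝓝 r] g := fun r hr => by
    filter_upwards [Ioi_mem_nhds hr] with s hs using (hgU s (le_of_lt hs)).symm
  refine core N hN ω p g hgs ?_ ?_ hg0 hode hdec1 hdec2 k hk v hvc hv2 hint ?_
  · intro x hx y hy hxy
    rw [hgU x hx, hgU y hy]; exact hanti hx hy hxy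
  · intro r hr; rw [hgU r hr]; exact hpos r hr
  · intro r hr
    have h1 := heq r hr
    have hE := hev0 r hr
    have hE2 : (fun s => U s ^ 2) =ᶠ[𝓝 r] fun s => g s ^ 2 := by
      filter_upwards [hE] with s hs
      rw [hs]
    unfold LplusRad lapRad at h1 ⊢
    rw [hE.eq_of_nhds, hE.deriv_eq, hE.deriv.deriv_eq, hE2.deriv_eq, hE2.deriv.deriv_eq] at h1
    exact h1

end
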